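/- arXiv:2504.12778 — 4 statements merged into one kernel-verified Lean document; each statement's English description precedes it below -/
import Mathlib

section
/- Let D be a finite set of vectors in ℝ^n and let v ∈ ℝ^n be dominated by D. Then for every query vector q ∈ ℝ^n, the supremum over w ∈ D ∪ {v} of max(0, ⟨q, w⟩) equals the supremum over w ∈ D \ {v} of max(0, ⟨q, w⟩), where the supremum over the empty set is taken to be 0. -/
/-!
The pruned value of a finite set is the least nonnegative upper bound of the inner products with its
members (`inner_le_prunedValue`, `prunedValue_nonneg`, `prunedValue_le`). Both inequalities thus
reduce to bounding each inner product. The only one not immediate is that with `v`: it is either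
nonpositive or strictly exceeded by that with some `u ∈ D`, and strictness gives `u ≠ v`.
-/

open scoped RealInnerProductSpace

noncomputable instance {n : ℕ} : DecidableEq (EuclideanSpace ℝ (Fin n)) :=
  Classical.decEq _

/-- A vector `v ∈ ℝ^n` is *dominated* by a finite set `D ⊆ ℝ^n` if for every query
vector `q ∈ ℝ^n`, either `⟪q, v⟫ ≤ 0` or there exists `w ∈ D` with `⟪q, w⟫ > ⟪q, v⟫`. -/
def Dominated {n : ℕ} (v : EuclideanSpace ℝ (Fin n))
    (D : Finset (EuclideanSpace ℝ (Fin n))) : Prop :=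
  ∀ q : EuclideanSpace ℝ (Fin n), ⟪q, v⟫ ≤ 0 ∨ ∃ w ∈ D, ⟪q, w⟫ > ⟪q, v⟫

/-- The pruned matching value `sup_{w ∈ S} max (0, ⟪q, w⟫)`; by the `Real.sSup`
convention this is `0` when `S` is empty. -/
noncomputable def prunedValue {n : ℕ} (S : Finset (EuclideanSpace ℝ (Fin n)))
    (q : EuclideanSpace ℝ (Fin n)) : ℝ :=
  sSup ((fun w => max 0 ⟪q, w⟫) '' (S : Set (EuclideanSpace ℝ (Fin n))))

/-- Each inner product with a member of `S` is at most the pruned value: finiteness of `S` bounds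
the image above, so that `sSup` is a genuine supremum. -/
lemma inner_le_prunedValue {n : ℕ} {S : Finset (EuclideanSpace ℝ (Fin n))}
    {w : EuclideanSpace ℝ (Fin n)} (hw : w ∈ S) (q : EuclideanSpace ℝ (Fin n)) :
    ⟪q, w⟫ ≤ prunedValue S q :=
  (le_max_right 0 _).trans
    (le_csSup ((S.finite_toSet.image _).bddAbove) (Set.mem_image_of_mem _ hw))

lemma prunedValue_nonneg {n : ℕ} (S : Finset (EuclideanSpace ℝ (Fin n)))
    (q : EuclideanSpace ℝ (Fin n)) : 0 ≤ prunedValue S q := by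
  apply Real.sSup_nonneg
  rintro _ ⟨w, -, rfl⟩
  exact le_max_left _ _

/-- Any nonnegative bound for the inner products with members of `S` bounds the pruned value; the
hypothesis `0 ≤ b` also covers empty `S`, where `sSup ∅ = 0`. -/
lemma prunedValue_le {n : ℕ} {S : Finset (EuclideanSpace ℝ (Fin n))}
    {q : EuclideanSpace ℝ (Fin n)} {b : ℝ} (hb : 0 ≤ b) (h : ∀ w ∈ S, ⟪q, w⟫ ≤ b) :
    prunedValue S q ≤ b := by
  apply Real.sSup_le _ hb
  rintro _ ⟨w, hw, rfl⟩
  exact max_le hb (h w hw)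

/-- if `v` is dominated by `D`, then for every query `q`, the supremum of
`max 0 ⟪q, w⟫` over `w ∈ D ∪ {v}` equals the supremum over `w ∈ D \ {v}`. -/
theorem pruning_dominated_vector {n : ℕ} (D : Finset (EuclideanSpace ℝ (Fin n)))
    (v : EuclideanSpace ℝ (Fin n)) (hv : Dominated v D)
    (q : EuclideanSpace ℝ (Fin n)) :
    prunedValue (insert v D) q = prunedValue (D.erase v) q := by
  apply le_antisymm
  · have h0 := prunedValue_nonneg (D.erase v) q
    refine prunedValue_le h0 fun w hw => ?_
    by_cases hwv : w = v
    · subst hwv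
      rcases hv q with h | ⟨u, hu, hlt⟩
      · exact h.trans h0
      · -- The strict inequality forces `u` to differ from the dominated vector.
        have hne : u ≠ w := by
          rintro rfl
          exact lt_irrefl _ hlt
        exact hlt.le.trans (inner_le_prunedValue (Finset.mem_erase.2 ⟨hne, hu⟩) q)
    · exact inner_le_prunedValue
        (Finset.mem_erase.2 ⟨hwv, Finset.mem_of_mem_insert_of_ne hw hwv⟩) q
  · exact prunedValue_le (prunedValue_nonneg _ q) fun w hw =>
      inner_le_prunedValue (Finset.mem_insert_of_mem (Finset.mem_of_mem_erase hw)) q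
end

section
/- (Global dominance) Let D be a finite set of vectors in ℝ^n. Define D⁻ = { v ∈ D : v is dominated by D } and D⁺ = D \ D⁻. Then every vector v ∈ D⁻ is dominated by D⁺. -/
/-! Fix a query `q` with `⟪q, v⟫ > 0`, and let `w` maximize `⟪q, ·⟫` over the finite set `D`.
Since `v` is dominated by `D`, the maximum is strictly larger than `⟪q, v⟫`, hence positive.
Nothing in `D` beats `w` at `q`, so `w` is not dominated by `D`; thus `w` lies in `D⁺`, and it
beats `v` at `q`. -/

open scoped RealInnerProductSpace

/-- Global dominance: with `D⁻ = {v ∈ D | v ≺ D}` and `D⁺ = D \ D⁻`,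
every `v ∈ D⁻` is dominated by `D⁺`. -/
theorem global_dominance {n : ℕ} (D Dminus Dplus : Finset (EuclideanSpace ℝ (Fin n)))
    (hminus : ∀ v, v ∈ Dminus ↔ v ∈ D ∧ Dominated v D)
    (hplus : Dplus = D \ Dminus) :
    ∀ v ∈ Dminus, Dominated v Dplus := by
  intro v hv q
  obtain ⟨hvD, hdom⟩ := (hminus v).1 hv
  rcases le_or_gt ⟪q, v⟫ 0 with hq | hq
  · exact Or.inl hq
  obtain ⟨w, hwD, hmax⟩ := D.exists_max_image (fun w => ⟪q, w⟫) ⟨v, hvD⟩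
  obtain ⟨u, huD, hu⟩ := (hdom q).resolve_left hq.not_ge
  have hvw : ⟪q, v⟫ < ⟪q, w⟫ := hu.trans_le (hmax u huD)
  refine Or.inr ⟨w, ?_, hvw⟩
  rw [hplus, Finset.mem_sdiff]
  refine ⟨hwD, fun hw => ?_⟩
  obtain ⟨x, hxD, hx⟩ := (((hminus w).1 hw).2 q).resolve_left (hq.trans hvw).not_ge
  exact (hmax x hxD).not_gt hx
end

section
/- Let D be a finite set of vectors in ℝ^n, let D⁻ = { v ∈ D : v is dominated by D } and D⁺ = D \ D⁻. Then for every q ∈ ℝ^n, the supremum over w ∈ D of max(0, ⟨q, w⟩) equals the supremum over w ∈ D⁺ of max(0, ⟨q, w⟩), where the supremum over the empty set is taken to be 0. -/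
/-!
Fix a query `q`. If `D` has an element with positive inner product against `q`, then a maximizer
`v` of `⟪q, ·⟫` over the finite set `D` is not dominated, because `q` itself violates the
domination condition for `v`; hence `v` survives the pruning and both suprema equal `⟪q, v⟫`.
Otherwise both suprema are `0`.
-/

open scoped RealInnerProductSpace

/-- with `D⁻ = {v ∈ D | v ≺ D}` and `D⁺ = D \ D⁻`, for every query `q`
the supremum of `max 0 ⟪q, w⟫` over `w ∈ D` equals the supremum over `w ∈ D⁺`. -/
theorem pruning_lossless_per_query {n : ℕ}
    (D Dminus Dplus : Finset (EuclideanSpace ℝ (Fin n)))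
    (hminus : ∀ v, v ∈ Dminus ↔ v ∈ D ∧ Dominated v D)
    (hplus : Dplus = D \ Dminus) :
    ∀ q : EuclideanSpace ℝ (Fin n), prunedValue D q = prunedValue Dplus q := by
  intro q
  subst hplus
  have hnonneg : 0 ≤ prunedValue (D \ Dminus) q := by
    apply Real.sSup_nonneg
    rintro _ ⟨w, _, rfl⟩
    exact le_max_left _ _
  have hbdd : ∀ S : Finset (EuclideanSpace ℝ (Fin n)),
      BddAbove ((fun w => max 0 ⟪q, w⟫) '' (S : Set (EuclideanSpace ℝ (Fin n)))) :=
    fun S => (S.finite_toSet.image _).bddAbove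
  apply le_antisymm
  · refine Real.sSup_le ?_ hnonneg
    rintro _ ⟨w, hw, rfl⟩
    obtain ⟨v, hv, hmax⟩ := D.exists_max_image (fun w => ⟪q, w⟫) ⟨w, hw⟩
    refine max_le hnonneg ((hmax w hw).trans ?_)
    rcases le_or_gt ⟪q, v⟫ 0 with hle | hpos
    · exact hle.trans hnonneg
    -- The query `q` itself witnesses that its maximizer `v` is not dominated.
    · have hv_plus : v ∈ D \ Dminus := by
        refine Finset.mem_sdiff.2 ⟨hv, fun hm => ?_⟩
        rcases ((hminus v).1 hm).2 q with h | ⟨u, hu, h⟩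
        · exact absurd h (not_le.2 hpos)
        · exact absurd h (not_lt.2 (hmax u hu))
      exact (le_max_right _ _).trans (le_csSup (hbdd _) ⟨v, hv_plus, rfl⟩)
  · refine Real.sSup_le ?_ (Real.sSup_nonneg ?_)
    · rintro _ ⟨w, hw, rfl⟩
      exact le_csSup (hbdd D) ⟨w, (Finset.mem_sdiff.1 hw).1, rfl⟩
    · rintro _ ⟨w, _, rfl⟩
      exact le_max_left _ _
end

section
/- (Dominated vectors can be removed from subsequent dominance tests) Let D be a finite set of vectors in ℝ^n and let u, v ∈ D both be dominated by D. Then v is dominated by D \ {u}. -/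
open scoped RealInnerProductSpace

/-- Dominated vectors can be removed from subsequent dominance tests:
if `u, v ∈ D` are both dominated by `D`, then `v` is dominated by `D \ {u}`. -/
theorem dominated_erase_dominated {n : ℕ} (D : Finset (EuclideanSpace ℝ (Fin n)))
    (u v : EuclideanSpace ℝ (Fin n)) (hu : u ∈ D) (hvD : v ∈ D)
    (hud : Dominated u D) (hvd : Dominated v D) :
    Dominated v (D.erase u) := by
  intro q
  rcases hvd q with h | ⟨w, hw, hwv⟩
  · exact .inl h
  by_cases hwu : w = u
  · subst hwu
    rcases hud q with h | ⟨x, hx, hxw⟩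
    · exact .inl (hwv.le.trans h)
    · exact .inr ⟨x, Finset.mem_erase.2 ⟨by rintro rfl; exact lt_irrefl _ hxw, hx⟩,
        lt_trans hwv hxw⟩
  · exact .inr ⟨w, Finset.mem_erase.2 ⟨hwu, hw⟩, hwv⟩
end
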